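/- Let H be a Hilbert space, (pₙ) a sequence of pairwise orthogonal finite rank projections summing strongly to the identity, and B ⊆ B(H) a C*-algebra commuting with every pₙ and containing pₙ K(H) pₙ for all n. If U ∈ B + K(H) is a unitary, then there exists a unitary V ∈ B with U − V ∈ K(H). -/

import Mathlib

/-!
Write `U = b + k` and let `P` be a finite sum of the `pₙ`. Cutting `b` down to the complement of `P`
and putting `1` on the range of `P` gives `c = P + (1 - P) b ∈ B`, a compact perturbation of `b`.
Since `b` is unitary modulo the compact operators and `P` commutes with `b`, the element
`1 - c⋆ c = (1 - P) (1 - b⋆ b)` is compact, and it is small once `P` is large; likewise for `c c⋆`.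
Hence `c` is invertible, and its unitary part `V = c |c|⁻¹` lies in `B`. It is a compact
perturbation of `c` because `c - V = V (|c| - 1) = V (c⋆ c - 1) (|c| + 1)⁻¹`.
-/

open Filter Topology

section Ring

variable {R : Type*}

theorem isUnit_of_isUnit_mul_of_isUnit_mul [Monoid R] {a b c : R} (hl : IsUnit (b * a))
    (hr : IsUnit (a * c)) : IsUnit a := by
  obtain ⟨x, hx⟩ := hr.exists_right_inv
  obtain ⟨y, hy⟩ := hl.exists_left_inv
  exact isUnit_iff_exists_and_exists.2 ⟨⟨c * x, by rwa [← mul_assoc]⟩, ⟨y * b, by rwa [mul_assoc]⟩⟩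

theorem one_sub_star_mul_self_mem_of_add [Ring R] [StarRing R] {J : TwoSidedIdeal R} {b k : R}
    (hk : k ∈ J) (hk' : star k ∈ J) (hJ : 1 - star (b + k) * (b + k) ∈ J) :
    1 - star b * b ∈ J := by
  have : 1 - star b * b = 1 - star (b + k) * (b + k) + star k * (b + k) + star b * k := by
    rw [star_add]; noncomm_ring
  rw [this]
  exact J.add_mem (J.add_mem hJ (J.mul_mem_right _ _ hk')) (J.mul_mem_left _ _ hk)

theorem isStarProjection_sum [NonUnitalSemiring R] [StarRing R] {ι : Type*} {p : ι → R}
    (hp : ∀ i, IsStarProjection (p i)) (horth : Pairwise fun i j ↦ p i * p j = 0) (s : Finset ι) :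
    IsStarProjection (∑ i ∈ s, p i) where
  isIdempotentElem := by
    rw [IsIdempotentElem, Finset.sum_mul_sum]
    refine Finset.sum_congr rfl fun i hi ↦ ?_
    rw [Finset.sum_eq_single_of_mem i hi fun j _ hj ↦ horth hj.symm, (hp i).isIdempotentElem]
  isSelfAdjoint := isSelfAdjoint_sum _ fun i _ ↦ (hp i).isSelfAdjoint

end Ring

/-- The element glued from the identity on the range of the idempotent `P` and from `x` on the range
of `1 - P`. The formula has this meaning only when `x` commutes with `P`. -/
def glueOne {R : Type*} [Ring R] (P x : R) : R := P + (1 - P) * x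

section glueOne

variable {R : Type*} [Ring R] {P x : R}

theorem one_sub_glueOne (P x : R) : 1 - glueOne P x = (1 - P) * (1 - x) := by
  unfold glueOne; noncomm_ring

theorem sub_glueOne (P x : R) : x - glueOne P x = P * (x - 1) := by
  unfold glueOne; noncomm_ring

theorem glueOne_mul_glueOne (hP : IsIdempotentElem P) (hx : Commute x P) (y : R) :
    glueOne P x * glueOne P y = glueOne P (x * y) := by
  have hxQ : Commute x (1 - P) := (Commute.one_right x).sub_right hx
  calc
    _ = P * P + P * (1 - P) * y + (1 - P) * (x * P) + (1 - P) * (x * (1 - P)) * y := by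
      unfold glueOne; noncomm_ring
    _ = P * P + P * (1 - P) * y + (1 - P) * P * x + (1 - P) * (1 - P) * (x * y) := by
      rw [hx.eq, hxQ.eq]; simp only [mul_assoc]
    _ = glueOne P (x * y) := by
      simp [glueOne, hP.eq, hP.mul_one_sub_self, hP.one_sub_mul_self, hP.one_sub.eq]

theorem star_glueOne [StarRing R] (hP : IsSelfAdjoint P) (hx : Commute x P) :
    star (glueOne P x) = glueOne P (star x) := by
  have hx' : Commute (star x) (1 - P) :=
    (Commute.one_right _).sub_right (by simpa [hP.star_eq] using hx.star_star)
  simp [glueOne, hP.star_eq, hx'.eq]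

end glueOne

/-- The unitary part `c |c|⁻¹` of the polar decomposition of an invertible element `c` of a
C⋆-algebra. The value has no meaning when `c` is not invertible. -/
noncomputable def unitaryPart {A : Type*} [CStarAlgebra A] [PartialOrder A] [StarOrderedRing A]
    (c : A) : A := c * Ring.inverse (CFC.abs c)

section CStarAlgebra

variable {A : Type*} [CStarAlgebra A]

theorem ringInverse_mem {B : StarSubalgebra ℂ A} (hB : IsClosed (B : Set A)) {a : A} (ha : a ∈ B) :
    Ring.inverse a ∈ B := by
  by_cases hu : IsUnit a
  · obtain ⟨u, hu⟩ : IsUnit (⟨a, ha⟩ : B) := B.coe_isUnit.1 hu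
    have : a = (Units.map (B.subtype : B →* A) u : Aˣ) := by simp [hu]
    rw [this, Ring.inverse_unit, ← map_inv]
    exact (u⁻¹ : Bˣ).val.property
  · rw [Ring.inverse_non_unit a hu]
    exact zero_mem B

variable [PartialOrder A] [StarOrderedRing A]

theorem isUnit_cfcAbs {c : A} (hc : IsUnit c) : IsUnit (CFC.abs c) := by
  rw [← isUnit_mul_self_iff, CFC.abs_mul_abs]
  exact hc.star.mul hc

theorem cfcAbs_mem {B : StarSubalgebra ℂ A} (hB : IsClosed (B : Set A)) {c : A} (hc : c ∈ B) :
    CFC.abs c ∈ B := by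
  rw [CFC.abs, CFC.sqrt_eq_real_sqrt _ (star_mul_self_nonneg c)]
  exact cfcₙ_mem (𝕜' := ℂ) Real.sqrt (mul_mem (star_mem hc) hc)

theorem cfcAbs_sub_one_mem {J : TwoSidedIdeal A} {c : A} (hc : 1 - star c * c ∈ J) :
    CFC.abs c - 1 ∈ J := by
  have hu : IsUnit (1 + CFC.abs c) :=
    (isStrictlyPositive_one.add_nonneg (CFC.abs_nonneg c)).isUnit
  have : CFC.abs c - 1 = -(1 - star c * c) * Ring.inverse (1 + CFC.abs c) := by
    rw [Ring.eq_mul_inverse_iff_mul_eq _ _ _ hu, ← CFC.abs_mul_abs]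
    noncomm_ring
  rw [this]
  exact J.mul_mem_right _ _ (J.neg_mem hc)

theorem unitaryPart_mul_abs {c : A} (hc : IsUnit c) : unitaryPart c * CFC.abs c = c := by
  rw [unitaryPart, mul_assoc, Ring.inverse_mul_cancel _ (isUnit_cfcAbs hc), mul_one]

theorem unitaryPart_mem_unitary {c : A} (hc : IsUnit c) : unitaryPart c ∈ unitary A := by
  have habs := isUnit_cfcAbs hc
  refine (hc.mul habs.ringInverse).mem_unitary_of_star_mul_self ?_
  calc
    _ = Ring.inverse (CFC.abs c) * CFC.abs c * (CFC.abs c * Ring.inverse (CFC.abs c)) := by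
      rw [star_mul, ((CFC.abs_nonneg c).isSelfAdjoint.ringInverse).star_eq, mul_assoc,
        ← mul_assoc (star c), ← CFC.abs_mul_abs]
      simp only [mul_assoc]
    _ = 1 := by rw [Ring.inverse_mul_cancel _ habs, Ring.mul_inverse_cancel _ habs, mul_one]

theorem unitaryPart_mem {B : StarSubalgebra ℂ A} (hB : IsClosed (B : Set A)) {c : A}
    (hc : c ∈ B) : unitaryPart c ∈ B :=
  mul_mem hc (ringInverse_mem hB (cfcAbs_mem hB hc))

theorem sub_unitaryPart_mem {J : TwoSidedIdeal A} {c : A} (hc : IsUnit c)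
    (hJ : 1 - star c * c ∈ J) : c - unitaryPart c ∈ J := by
  have : c - unitaryPart c = unitaryPart c * (CFC.abs c - 1) := by
    rw [mul_sub, unitaryPart_mul_abs hc, mul_one]
  rw [this]
  exact J.mul_mem_left _ _ (cfcAbs_sub_one_mem hJ)

theorem exists_mem_unitary_sub_mem {B : StarSubalgebra ℂ A} (hB : IsClosed (B : Set A))
    {J : TwoSidedIdeal A} {P b : A} (hP : IsStarProjection P) (hPB : P ∈ B) (hPJ : P ∈ J)
    (hb : b ∈ B) (hbP : Commute b P) (hJ : 1 - star b * b ∈ J)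
    (hl : ‖(1 - P) * (1 - star b * b)‖ < 1) (hr : ‖(1 - P) * (1 - b * star b)‖ < 1) :
    ∃ V ∈ B, V ∈ unitary A ∧ b - V ∈ J := by
  set c := glueOne P b with hc
  have hc_mem : c ∈ B := add_mem hPB (mul_mem (sub_mem (one_mem B) hPB) hb)
  have hb'P : Commute (star b) P := by simpa [hP.isSelfAdjoint.star_eq] using hbP.star_star
  have hc_star : star c = glueOne P (star b) := star_glueOne hP.isSelfAdjoint hbP
  have hcl : 1 - star c * c = (1 - P) * (1 - star b * b) := by
    rw [hc_star, hc, glueOne_mul_glueOne hP.isIdempotentElem hb'P, one_sub_glueOne]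
  have hcr : 1 - c * star c = (1 - P) * (1 - b * star b) := by
    rw [hc_star, hc, glueOne_mul_glueOne hP.isIdempotentElem hbP, one_sub_glueOne]
  have isUnit_of_near_one {x : A} (hx : ‖1 - x‖ < 1) : IsUnit x := by
    simpa using isUnit_one_sub_of_norm_lt_one hx
  have hc_unit : IsUnit c := isUnit_of_isUnit_mul_of_isUnit_mul
    (isUnit_of_near_one (hcl ▸ hl)) (isUnit_of_near_one (hcr ▸ hr))
  refine ⟨unitaryPart c, unitaryPart_mem hB hc_mem, unitaryPart_mem_unitary hc_unit, ?_⟩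
  rw [← sub_add_sub_cancel b c]
  refine J.add_mem ?_ (sub_unitaryPart_mem hc_unit (hcl ▸ J.mul_mem_left _ _ hJ))
  rw [sub_glueOne]
  exact J.mul_mem_right _ _ hPJ

end CStarAlgebra

section CompactOperator

section NormedSpace

variable {𝕜 E F G : Type*} [NontriviallyNormedField 𝕜] [NormedAddCommGroup E] [NormedSpace 𝕜 E]
  [NormedAddCommGroup F] [NormedSpace 𝕜 F] [NormedAddCommGroup G] [NormedSpace 𝕜 G]

theorem isCompactOperator_of_finiteDimensional_range [LocallyCompactSpace 𝕜] (T : E →L[𝕜] F)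
    [FiniteDimensional 𝕜 T.range] : IsCompactOperator T := by
  have := FiniteDimensional.proper 𝕜 T.range
  exact (isCompactOperator_of_locallyCompactSpace_dom T.rangeRestrict).clm_comp T.range.subtypeL

variable (𝕜 E) in
/-- The two-sided ideal `K(E)` of compact operators on `E`. -/
def compactIdeal : TwoSidedIdeal (E →L[𝕜] E) :=
  .mk' {T | IsCompactOperator T} isCompactOperator_zero (fun hS hT ↦ hS.add hT) (fun hT ↦ hT.neg)
    (fun {S _} hT ↦ hT.clm_comp S) (fun {_ S} hT ↦ hT.comp_clm S)

@[simp]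
theorem mem_compactIdeal {T : E →L[𝕜] E} : T ∈ compactIdeal 𝕜 E ↔ IsCompactOperator T :=
  TwoSidedIdeal.mem_mk' ..

-- A bounded family is equicontinuous, so pointwise convergence is uniform on compact sets.
theorem tendsto_comp_of_isCompactOperator {ι : Type*} {l : Filter ι} {Q : ι → F →L[𝕜] G}
    {Q₀ : F →L[𝕜] G} (hQ : BddAbove (Set.range (‖Q ·‖)))
    (hlim : ∀ x, Tendsto (Q · x) l (𝓝 (Q₀ x))) {T : E →L[𝕜] F} (hT : IsCompactOperator T) :
    Tendsto (fun i ↦ Q i ∘L T) l (𝓝 (Q₀ ∘L T)) := by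
  have hequi : Equicontinuous ((↑) ∘ Q : ι → F → G) :=
    ((NormedSpace.equicontinuous_TFAE Q).out 7 1).1 hQ
  refine (UniformConvergenceCLM.tendsto_iff_tendstoUniformlyOn _ _ _).2 fun s hs ↦ ?_
  obtain ⟨K, hK, hTK⟩ := hT.image_subset_compact_of_isVonNBounded hs
  have hunif : TendstoUniformlyOn (fun i x ↦ Q i x) Q₀ l K := by
    refine UniformOnFun.tendsto_iff_tendstoUniformlyOn.1
      ((EquicontinuousOn.tendsto_uniformOnFun_iff_pi' (𝔖 := {K}) (by simpa using hK)
        (fun L _ ↦ hequi.equicontinuousOn L) l Q₀).2 ?_) K rfl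
    exact tendsto_pi_nhds.2 fun x ↦ hlim x
  exact (hunif.comp T).mono (Set.image_subset_iff.1 hTK)

end NormedSpace

theorem isCompactOperator_adjoint {𝕜 E F : Type*} [RCLike 𝕜] [NormedAddCommGroup E]
    [InnerProductSpace 𝕜 E] [CompleteSpace E] [NormedAddCommGroup F] [InnerProductSpace 𝕜 F]
    [CompleteSpace F] {T : E →L[𝕜] F} (hT : IsCompactOperator T) :
    IsCompactOperator T.adjoint := by
  let S (s : Finset F) : Submodule 𝕜 F := Submodule.span 𝕜 (s : Set F)
  let P (s : Finset F) : F →L[𝕜] F := (S s).starProjection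
  have hP_cpt (s : Finset F) : IsCompactOperator (P s) := by
    have : FiniteDimensional 𝕜 (P s).range := by
      rw [Submodule.range_starProjection]
      infer_instance
    exact isCompactOperator_of_finiteDimensional_range (P s)
  have hP_bdd : BddAbove (Set.range (‖P ·‖)) :=
    ⟨1, by rintro _ ⟨s, rfl⟩; exact (S s).starProjection_norm_le⟩
  have hP_lim (x : F) : Tendsto (P · x) atTop (𝓝 x) := by
    refine Submodule.starProjection_tendsto_self S
      (fun s t hst ↦ Submodule.span_mono (Finset.coe_subset.2 hst)) x fun y _ ↦ ?_
    exact Submodule.le_topologicalClosure _ (Submodule.mem_iSup_of_mem {y} (by simp [S]))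
  have hPT : Tendsto (fun s ↦ P s ∘L T) atTop (𝓝 T) :=
    tendsto_comp_of_isCompactOperator (Q₀ := .id 𝕜 F) hP_bdd hP_lim hT
  have hPT_adj : Tendsto (fun s ↦ (P s ∘L T).adjoint) atTop (𝓝 T.adjoint) :=
    (ContinuousLinearMap.adjoint.continuous.tendsto T).comp hPT
  refine isCompactOperator_of_tendsto hPT_adj (.of_forall fun s ↦ ?_)
  rw [ContinuousLinearMap.adjoint_comp, (isSelfAdjoint_starProjection (S s)).adjoint_eq]
  exact (hP_cpt s).clm_comp T.adjoint

end CompactOperator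

section Hilbert

variable {H : Type*} [NormedAddCommGroup H] [InnerProductSpace ℂ H] [CompleteSpace H]

theorem exists_mem_unitary_isCompactOperator_sub {ι : Type*} {l : Filter ι} [l.NeBot]
    {P : ι → H →L[ℂ] H} (hP : ∀ i, IsStarProjection (P i)) (hP_cpt : ∀ i, IsCompactOperator (P i))
    (hP_lim : ∀ ξ, Tendsto (P · ξ) l (𝓝 ξ)) {B : StarSubalgebra ℂ (H →L[ℂ] H)}
    (hB : IsClosed (B : Set (H →L[ℂ] H))) (hPB : ∀ i, P i ∈ B) {b : H →L[ℂ] H} (hb : b ∈ B)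
    (hbP : ∀ i, Commute b (P i)) (hl : IsCompactOperator (1 - star b * b : H →L[ℂ] H))
    (hr : IsCompactOperator (1 - b * star b : H →L[ℂ] H)) :
    ∃ V ∈ B, V ∈ unitary (H →L[ℂ] H) ∧ IsCompactOperator (b - V) := by
  have eventually_norm_lt {T : H →L[ℂ] H} (hT : IsCompactOperator T) :
      ∀ᶠ i in l, ‖(1 - P i) * T‖ < 1 := by
    have hbdd : BddAbove (Set.range (‖P ·‖)) := ⟨1, by rintro _ ⟨i, rfl⟩; exact (hP i).norm_le⟩
    have hPT : Tendsto (fun i ↦ P i * T) l (𝓝 T) :=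
      tendsto_comp_of_isCompactOperator (Q₀ := 1) hbdd hP_lim hT
    simpa [sub_mul, dist_eq_norm, norm_sub_rev] using
      hPT.eventually (Metric.ball_mem_nhds T one_pos)
  obtain ⟨i, hil, hir⟩ := ((eventually_norm_lt hl).and (eventually_norm_lt hr)).exists
  simpa using exists_mem_unitary_sub_mem (J := compactIdeal ℂ H) hB (hP i) (hPB i)
    (by simpa using hP_cpt i) hb (hbP i) (by simpa using hl) hil hir

theorem unitary_compact_perturbation_into_block_algebra_general {ι : Type*} (p : ι → H →L[ℂ] H)
    (hp : ∀ i, IsStarProjection (p i)) (hcpt : ∀ i, IsCompactOperator (p i))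
    (horth : Pairwise fun i j ↦ p i * p j = 0) (hsum : ∀ ξ : H, HasSum (fun i ↦ p i ξ) ξ)
    (B : StarSubalgebra ℂ (H →L[ℂ] H)) (hB : IsClosed (B : Set (H →L[ℂ] H)))
    (hcomm : ∀ i, ∀ b ∈ B, b * p i = p i * b) (hmem : ∀ i, p i ∈ B) (U : H →L[ℂ] H)
    (hUBK : ∃ b ∈ B, ∃ k : H →L[ℂ] H, IsCompactOperator k ∧ U = b + k)
    (hl : IsCompactOperator (1 - star U * U : H →L[ℂ] H))
    (hr : IsCompactOperator (1 - U * star U : H →L[ℂ] H)) :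
    ∃ V ∈ B, star V * V = 1 ∧ V * star V = 1 ∧ IsCompactOperator (U - V) := by
  obtain ⟨b, hb, k, hk, rfl⟩ := hUBK
  have hk_star : IsCompactOperator (star k : H →L[ℂ] H) := isCompactOperator_adjoint hk
  simp only [← mem_compactIdeal (𝕜 := ℂ)] at hk hk_star hl hr
  have hbl : 1 - star b * b ∈ compactIdeal ℂ H := one_sub_star_mul_self_mem_of_add hk hk_star hl
  have hbr : 1 - b * star b ∈ compactIdeal ℂ H := by
    simpa only [star_star] using one_sub_star_mul_self_mem_of_add (b := star b) hk_star
      (by simpa only [star_star] using hk) (by simpa only [star_add, star_star] using hr)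
  obtain ⟨V, hVB, ⟨hVl, hVr⟩, hbV⟩ := exists_mem_unitary_isCompactOperator_sub
    (isStarProjection_sum hp horth)
    (fun s ↦ mem_compactIdeal.1 (sum_mem fun i _ ↦ mem_compactIdeal.2 (hcpt i)))
    (fun ξ ↦ by simpa using! hsum ξ) hB (fun s ↦ sum_mem fun i _ ↦ hmem i) hb
    (fun s ↦ .sum_right _ _ _ fun i _ ↦ hcomm i b hb)
    (mem_compactIdeal.1 hbl) (mem_compactIdeal.1 hbr)
  refine ⟨V, hVB, hVl, hVr, ?_⟩
  rw [add_sub_right_comm]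
  exact hbV.add (mem_compactIdeal.1 hk)

end Hilbert

/- Statement 19 (key step of Proposition A.2, Eckhardt): Let `H` be a Hilbert space,
`(pₙ)` a sequence of pairwise orthogonal finite-rank (orthogonal) projections summing
strongly to the identity, and `B ⊆ B(H)` a C*-algebra (a closed star-subalgebra) commuting
with every `pₙ` and containing `pₙ K(H) pₙ` for all `n`.  If `U ∈ B + K(H)` is a unitary,
then there is a unitary `V ∈ B` with `U − V ∈ K(H)`. -/
theorem unitary_compact_perturbation_into_block_algebra
    {H : Type*} [NormedAddCommGroup H] [InnerProductSpace ℂ H] [CompleteSpace H]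
    (p : ℕ → H →L[ℂ] H)
    (hsa : ∀ n, IsSelfAdjoint (p n)) (hidem : ∀ n, p n * p n = p n)
    (hfin : ∀ n, FiniteDimensional ℂ (LinearMap.range (p n : H →ₗ[ℂ] H)))
    (horth : ∀ m n, m ≠ n → p m * p n = 0)
    (hsum : ∀ ξ : H, HasSum (fun n => p n ξ) ξ)
    (B : StarSubalgebra ℂ (H →L[ℂ] H)) (hB : IsClosed (B : Set (H →L[ℂ] H)))
    (hcomm : ∀ n, ∀ b ∈ B, b * p n = p n * b)
    (hcorner : ∀ (n : ℕ) (T : H →L[ℂ] H), IsCompactOperator T → p n * T * p n ∈ B)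
    (U : H →L[ℂ] H)
    (hUBK : ∃ b ∈ B, ∃ kk : H →L[ℂ] H, IsCompactOperator kk ∧ U = b + kk)
    (hUu : star U * U = 1 ∧ U * star U = 1) :
    ∃ V ∈ B, star V * V = 1 ∧ V * star V = 1 ∧ IsCompactOperator (U - V) := by
  have hcpt (n : ℕ) : IsCompactOperator (p n) :=
    have := hfin n
    isCompactOperator_of_finiteDimensional_range (p n)
  exact unitary_compact_perturbation_into_block_algebra_general p (fun n ↦ ⟨hidem n, hsa n⟩) hcpt
    horth hsum B hB hcomm (fun n ↦ by simpa [hidem] using hcorner n (p n) (hcpt n)) U hUBK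
    (by simpa [hUu.1] using isCompactOperator_zero) (by simpa [hUu.2] using isCompactOperator_zero)
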